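/- arXiv:1806.03232 — 8 statements merged into one kernel-verified Lean document; each statement's English description precedes it below -/
import Mathlib

section
/- Let M be an n×n real matrix (n ≥ 1) with nonnegative entries whose row sums are all at most 1, such that M is irreducible (for every pair of indices i ≠ j there exists an integer k ≥ 1 with (M^k)_{ij} > 0) and at least one row of M has sum strictly less than 1. Then I − M is invertible, the Neumann series ∑_{t=0}^∞ M^t converges, its sum equals (I − M)^{-1}, and every entry of (I − M)^{-1} is nonnegative. -/
open Matrix

/-!
Call a nonnegative vector `x` a strict supersolution of the nonnegative matrix `M` if `M x < x` in
every coordinate. By telescoping, `(∑ t < T, M ^ t) (x - M x) = x - M ^ T x ≤ x`, and since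
`x - M x` is positive everywhere this bounds the partial Neumann sums entrywise.

The row sum conditions only say that `v = 1` satisfies `M v ≤ v`, with strict inequality in a
coordinate which, by irreducibility, every index reaches. Summing along the chain makes this strict:
`x = (∑ t < K, M ^ t) v` has `x - M x = (∑ t < K, M ^ t) (v - M v)`, which is positive everywhere
once `K` exceeds the number of steps needed from each index.
-/

section TopologicalRing

variable {R : Type*} [Ring R] [TopologicalSpace R] [IsTopologicalRing R] [T2Space R]

theorem isUnit_one_sub_of_summable_pow {x : R} (hx : Summable (x ^ ·)) : IsUnit (1 - x) :=
  ⟨⟨1 - x, ∑' t : ℕ, x ^ t, hx.one_sub_mul_tsum_pow, hx.tsum_pow_mul_one_sub⟩, rfl⟩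

end TopologicalRing

section Matrix

variable {ι : Type*} [Fintype ι]

theorem mulVec_one_apply {κ R : Type*} [NonAssocSemiring R] (A : Matrix κ ι R) (i : κ) :
    (A *ᵥ 1) i = ∑ j, A i j := by
  simp only [mulVec, dotProduct_one]

section OrderedSemiring

variable {κ R : Type*} [Semiring R] [PartialOrder R] [IsOrderedRing R]

theorem mulVec_nonneg {A : Matrix κ ι R} (hA : ∀ i j, 0 ≤ A i j) {v : ι → R} (hv : 0 ≤ v) :
    0 ≤ A *ᵥ v :=
  fun i => dotProduct_nonneg_of_nonneg (hA i) hv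

theorem apply_mul_apply_le_mulVec {A : Matrix κ ι R} (hA : ∀ i j, 0 ≤ A i j) {v : ι → R}
    (hv : 0 ≤ v) (i : κ) (j : ι) : A i j * v j ≤ (A *ᵥ v) i :=
  Finset.single_le_sum (f := fun l => A i l * v l) (fun l _ => mul_nonneg (hA i l) (hv l))
    (Finset.mem_univ j)

variable [DecidableEq ι] {M : Matrix ι ι R}

theorem geom_sum_apply_nonneg (hM : ∀ i j, 0 ≤ M i j) (T : ℕ) (i j : ι) :
    0 ≤ (∑ t ∈ Finset.range T, M ^ t) i j := by
  rw [Matrix.sum_apply]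
  exact Finset.sum_nonneg fun t _ => pow_apply_nonneg hM t i j

theorem pow_apply_le_geom_sum_apply (hM : ∀ i j, 0 ≤ M i j) {k T : ℕ} (hk : k < T) (i j : ι) :
    (M ^ k) i j ≤ (∑ t ∈ Finset.range T, M ^ t) i j := by
  rw [Matrix.sum_apply]
  exact Finset.single_le_sum (f := fun t => (M ^ t) i j) (fun t _ => pow_apply_nonneg hM t i j)
    (Finset.mem_range.2 hk)

theorem exists_pow_apply_pos [Nontrivial R] {i j : ι} (h : i ≠ j → ∃ k, 0 < (M ^ k) i j) :
    ∃ k, 0 < (M ^ k) i j := by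
  obtain rfl | hij := eq_or_ne i j
  · exact ⟨0, by simp⟩
  · exact h hij

end OrderedSemiring

variable [DecidableEq ι]

section Ring

variable {R : Type*} [Ring R]

theorem geom_sum_mulVec_sub_mulVec (M : Matrix ι ι R) (v : ι → R) (T : ℕ) :
    (∑ t ∈ Finset.range T, M ^ t) *ᵥ (v - M *ᵥ v) = v - M ^ T *ᵥ v := by
  calc (∑ t ∈ Finset.range T, M ^ t) *ᵥ (v - M *ᵥ v)
      = ((∑ t ∈ Finset.range T, M ^ t) * (1 - M)) *ᵥ v := by
        rw [← mulVec_mulVec, sub_mulVec, one_mulVec]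
    _ = v - M ^ T *ᵥ v := by rw [geom_sum_mul_neg, sub_mulVec, one_mulVec]

theorem sub_mulVec_geom_sum_mulVec (M : Matrix ι ι R) (v : ι → R) (T : ℕ) :
    (∑ t ∈ Finset.range T, M ^ t) *ᵥ v - M *ᵥ ((∑ t ∈ Finset.range T, M ^ t) *ᵥ v) =
      (∑ t ∈ Finset.range T, M ^ t) *ᵥ (v - M *ᵥ v) := by
  have hcomm : M * ∑ t ∈ Finset.range T, M ^ t = (∑ t ∈ Finset.range T, M ^ t) * M :=
    Commute.sum_right _ _ _ fun t _ => Commute.self_pow M t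
  rw [mulVec_sub, mulVec_mulVec, mulVec_mulVec, hcomm]

end Ring

theorem exists_nonneg_mulVec_lt {R : Type*} [Ring R] [PartialOrder R] [IsStrictOrderedRing R]
    {M : Matrix ι ι R} (hM : ∀ i j, 0 ≤ M i j) {v : ι → R} (hv : 0 ≤ v) (hMv : M *ᵥ v ≤ v)
    (hreach : ∀ i, ∃ j, (∃ k, 0 < (M ^ k) i j) ∧ (M *ᵥ v) j < v j) :
    ∃ x, 0 ≤ x ∧ ∀ i, (M *ᵥ x) i < x i := by
  choose j hpos hlt using hreach
  choose k hk using hpos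
  obtain ⟨K, hK⟩ : ∃ K, ∀ i, k i < K :=
    ⟨Finset.univ.sup k + 1, fun i => Nat.lt_succ_of_le (Finset.le_sup (Finset.mem_univ i))⟩
  have hS := geom_sum_apply_nonneg hM K
  refine ⟨(∑ t ∈ Finset.range K, M ^ t) *ᵥ v, mulVec_nonneg hS hv, fun i => sub_pos.1 ?_⟩
  have hSpos : 0 < (∑ t ∈ Finset.range K, M ^ t) i (j i) :=
    (hk i).trans_le (pow_apply_le_geom_sum_apply hM (hK i) i (j i))
  calc 0 < (∑ t ∈ Finset.range K, M ^ t) i (j i) * (v - M *ᵥ v) (j i) :=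
        mul_pos hSpos (sub_pos.2 (hlt i))
    _ ≤ ((∑ t ∈ Finset.range K, M ^ t) *ᵥ (v - M *ᵥ v)) i :=
        apply_mul_apply_le_mulVec hS (sub_nonneg.2 hMv) i (j i)
    _ = _ := congrFun (sub_mulVec_geom_sum_mulVec M v K).symm i

theorem geom_sum_apply_le_div {R : Type*} [Field R] [LinearOrder R] [IsStrictOrderedRing R]
    {M : Matrix ι ι R} (hM : ∀ i j, 0 ≤ M i j) {x : ι → R} (hx : 0 ≤ x)
    (hMx : ∀ i, (M *ᵥ x) i < x i) (T : ℕ) (i j : ι) :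
    (∑ t ∈ Finset.range T, M ^ t) i j ≤ x i / (x j - (M *ᵥ x) j) := by
  rw [le_div_iff₀ (sub_pos.2 (hMx j))]
  calc (∑ t ∈ Finset.range T, M ^ t) i j * (x - M *ᵥ x) j
      ≤ ((∑ t ∈ Finset.range T, M ^ t) *ᵥ (x - M *ᵥ x)) i :=
        apply_mul_apply_le_mulVec (geom_sum_apply_nonneg hM T)
          (sub_nonneg.2 fun l => (hMx l).le) i j
    _ = x i - (M ^ T *ᵥ x) i := congrFun (geom_sum_mulVec_sub_mulVec M x T) i
    _ ≤ x i := sub_le_self _ (mulVec_nonneg (pow_apply_nonneg hM T) hx i)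

theorem tsum_pow_apply_nonneg {R : Type*} [Semiring R] [PartialOrder R] [IsOrderedRing R]
    [TopologicalSpace R] [OrderClosedTopology R] {M : Matrix ι ι R} (hM : ∀ i j, 0 ≤ M i j)
    (hsum : Summable (M ^ ·)) (i j : ι) : 0 ≤ (∑' t : ℕ, M ^ t) i j :=
  (Pi.hasSum.1 (Pi.hasSum.1 hsum.hasSum i) j).nonneg fun t => pow_apply_nonneg hM t i j

section Real

variable {M : Matrix ι ι ℝ}

theorem summable_pow_of_mulVec_lt (hM : ∀ i j, 0 ≤ M i j) {x : ι → ℝ} (hx : 0 ≤ x)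
    (hMx : ∀ i, (M *ᵥ x) i < x i) : Summable (M ^ ·) := by
  refine Pi.summable.2 fun i => Pi.summable.2 fun j => ?_
  exact summable_of_sum_range_le (fun t => pow_apply_nonneg hM t i j) fun T =>
    (Matrix.sum_apply i j _ _).symm.trans_le (geom_sum_apply_le_div hM hx hMx T i j)

theorem stmt0_general (hM : ∀ i j, 0 ≤ M i j) {v : ι → ℝ} (hv : 0 ≤ v) (hMv : M *ᵥ v ≤ v)
    (hreach : ∀ i, ∃ j, (∃ k, 0 < (M ^ k) i j) ∧ (M *ᵥ v) j < v j) :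
    IsUnit (1 - M) ∧
      Summable (fun t : ℕ => M ^ t) ∧
      (∑' t : ℕ, M ^ t) = (1 - M)⁻¹ ∧
      ∀ i j, 0 ≤ (1 - M)⁻¹ i j := by
  obtain ⟨x, hx, hMx⟩ := exists_nonneg_mulVec_lt hM hv hMv hreach
  have hsum : Summable (fun t : ℕ => M ^ t) := summable_pow_of_mulVec_lt hM hx hMx
  have hinv : (1 - M)⁻¹ = ∑' t : ℕ, M ^ t := inv_eq_right_inv hsum.one_sub_mul_tsum_pow
  exact ⟨isUnit_one_sub_of_summable_pow hsum, hsum, hinv.symm,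
    fun i j => hinv ▸ tsum_pow_apply_nonneg hM hsum i j⟩

end Real

end Matrix

/-- If an `n × n` nonnegative real matrix `M` (with `n ≥ 1`) has all row sums at most one,
is irreducible, and at least one row sum is strictly less than one, then `I - M` is invertible,
the Neumann series `∑ M^t` converges, its sum equals `(I - M)⁻¹`, and every entry of
`(I - M)⁻¹` is nonnegative. -/
theorem stmt0 (n : ℕ) (hn : 1 ≤ n) (M : Matrix (Fin n) (Fin n) ℝ)
    (hnonneg : ∀ i j, 0 ≤ M i j)
    (hrow : ∀ i, ∑ j, M i j ≤ 1)
    (hirr : ∀ i j : Fin n, i ≠ j → ∃ k : ℕ, 1 ≤ k ∧ 0 < (M ^ k) i j)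
    (hsub : ∃ i, ∑ j, M i j < 1) :
    IsUnit (1 - M) ∧
      Summable (fun t : ℕ => M ^ t) ∧
      (∑' t : ℕ, M ^ t) = (1 - M)⁻¹ ∧
      ∀ i j, 0 ≤ (1 - M)⁻¹ i j := by
  obtain ⟨j, hj⟩ := hsub
  exact stmt0_general hnonneg zero_le_one (fun i => (mulVec_one_apply M i).trans_le (hrow i))
    fun i => ⟨j, exists_pow_apply_pos fun hij => (hirr i j hij).imp fun _ => And.right,
      (mulVec_one_apply M j).trans_lt hj⟩
end

section
/- Let P be an n×n row-stochastic real matrix, let α ∈ ℝ^n with 0 ≤ α_i ≤ 1 for all i, set P̂ = (I − Diag(α))·P, assume I − P̂ is invertible and let Ẑ = (I − P̂)^{-1}. Let σ_in ∈ ℝ^n be nonnegative with ∑_i (σ_in)_i = 1, let n̄_ref = Ẑ^⊤ σ_in, and define σ_out by (σ_out)_j = α_j · (n̄_ref)_j. Define the matrix Γ_ref = Diag(σ_in) · Ẑ · Diag(α). Then: (1) Ẑ α = 1 (the all-ones vector); (2) for every i, ∑_j (Γ_ref)_{ij} = (σ_in)_i; (3) for every j, ∑_i (Γ_ref)_{ij}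 = (σ_out)_j; and (4) ∑_{i,j} (Γ_ref)_{ij} = 1. -/
open Matrix

section MatrixSums

variable {m k R : Type*} [Fintype m] [Fintype k] [DecidableEq m] [DecidableEq k]

theorem sum_row_diagonal_mul_mul_diagonal [NonUnitalSemiring R]
    (v : m → R) (A : Matrix m k R) (w : k → R) (i : m) :
    ∑ j, (diagonal v * A * diagonal w) i j = v i * (A *ᵥ w) i := by
  simp only [mul_diagonal, diagonal_mul, mul_assoc, ← Finset.mul_sum, mulVec, dotProduct]

theorem sum_col_diagonal_mul_mul_diagonal [NonUnitalSemiring R]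
    (v : m → R) (A : Matrix m k R) (w : k → R) (j : k) :
    ∑ i, (diagonal v * A * diagonal w) i j = (v ᵥ* A) j * w j := by
  simp only [mul_diagonal, diagonal_mul, ← Finset.sum_mul, vecMul, dotProduct]

end MatrixSums

section KilledChain

variable {m R : Type*} [Fintype m] [DecidableEq m]

/-- The transition matrix `P̂ = (I - Diag(α)) P` of the chain with transition matrix `P` that is
killed at state `i` with probability `α i` before each step. -/
def killedTransition [Ring R] (P : Matrix m m R) (α : m → R) : Matrix m m R :=
  (1 - diagonal α) * P

/-- The fundamental matrix `Ẑ = (I - P̂)⁻¹` of the killed chain: its `(i, j)` entry is the expected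
number of visits to `j` from `i`, the start included. It is the zero matrix when `I - P̂` is not
invertible. -/
noncomputable def fundamentalMatrix [CommRing R] (P : Matrix m m R) (α : m → R) : Matrix m m R :=
  (1 - killedTransition P α)⁻¹

/-- The vector `n̄_ref = Ẑᵀ σ` of expected numbers of visits of the killed chain to each state, for
the starting distribution `σ`. -/
noncomputable def expectedVisits [CommRing R] (P : Matrix m m R) (α σ : m → R) : m → R :=
  (fundamentalMatrix P α)ᵀ *ᵥ σ

/-- The reference coupling `Γ_ref = Diag(σ) Ẑ Diag(α)`, the joint law of the starting state and the
state of killing, for the starting distribution `σ`. -/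
noncomputable def referenceCoupling [CommRing R] (P : Matrix m m R) (α σ : m → R) :
    Matrix m m R :=
  diagonal σ * fundamentalMatrix P α * diagonal α

theorem one_sub_killedTransition_mulVec_one [Ring R] {P : Matrix m m R}
    (hP : ∀ i, ∑ j, P i j = 1) (α : m → R) :
    (1 - killedTransition P α) *ᵥ 1 = α := by
  have hP_one : P *ᵥ 1 = 1 := funext fun i ↦ (dotProduct_one _).trans (hP i)
  calc (1 - killedTransition P α) *ᵥ 1
      = 1 - (1 - diagonal α) *ᵥ (P *ᵥ 1) := by
        rw [sub_mulVec, one_mulVec, killedTransition, mulVec_mulVec]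
    _ = diagonal α *ᵥ 1 := by rw [hP_one, sub_mulVec, one_mulVec, sub_sub_cancel]
    _ = α := by
        ext i
        rw [mulVec_diagonal, Pi.one_apply, mul_one]

variable [CommRing R]

theorem sum_col_referenceCoupling (P : Matrix m m R) (α σ : m → R) (j : m) :
    ∑ i, referenceCoupling P α σ i j = α j * expectedVisits P α σ j := by
  rw [referenceCoupling, sum_col_diagonal_mul_mul_diagonal, expectedVisits, mulVec_transpose,
    mul_comm]

variable {P : Matrix m m R} {α : m → R}

-- The `i`-th entry of `Ẑ α` is the probability that the chain started at `i` is ever killed.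
theorem fundamentalMatrix_mulVec_killing (hP : ∀ i, ∑ j, P i j = 1)
    (hinv : IsUnit (1 - killedTransition P α)) :
    fundamentalMatrix P α *ᵥ α = 1 := by
  let := hinv.invertible
  exact inv_mulVec_eq_vec (one_sub_killedTransition_mulVec_one hP α).symm

theorem sum_row_referenceCoupling (hP : ∀ i, ∑ j, P i j = 1)
    (hinv : IsUnit (1 - killedTransition P α)) (σ : m → R) (i : m) :
    ∑ j, referenceCoupling P α σ i j = σ i := by
  rw [referenceCoupling, sum_row_diagonal_mul_mul_diagonal,
    fundamentalMatrix_mulVec_killing hP hinv, Pi.one_apply, mul_one]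

theorem sum_referenceCoupling (hP : ∀ i, ∑ j, P i j = 1)
    (hinv : IsUnit (1 - killedTransition P α)) (σ : m → R) :
    ∑ i, ∑ j, referenceCoupling P α σ i j = ∑ i, σ i :=
  Finset.sum_congr rfl fun i _ ↦ sum_row_referenceCoupling hP hinv σ i

theorem stmt2_general (hP : ∀ i, ∑ j, P i j = 1) (hinv : IsUnit (1 - killedTransition P α))
    {σ : m → R} (hσ : ∑ i, σ i = 1) :
    fundamentalMatrix P α *ᵥ α = 1 ∧
      (∀ i, ∑ j, referenceCoupling P α σ i j = σ i) ∧
      (∀ j, ∑ i, referenceCoupling P α σ i j = α j * expectedVisits P α σ j) ∧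
      ∑ i, ∑ j, referenceCoupling P α σ i j = 1 :=
  ⟨fundamentalMatrix_mulVec_killing hP hinv, sum_row_referenceCoupling hP hinv σ,
    sum_col_referenceCoupling P α σ, (sum_referenceCoupling hP hinv σ).trans hσ⟩

end KilledChain

/-- The reference coupling built from the killed Markov process has the prescribed starting
margin `σ_in` and ending margin `σ_out`, and sums to one. -/
theorem stmt2 (n : ℕ) (P : Matrix (Fin n) (Fin n) ℝ)
    (hP0 : ∀ i j, 0 ≤ P i j) (hP1 : ∀ i, ∑ j, P i j = 1)
    (α : Fin n → ℝ) (hα : ∀ i, 0 ≤ α i ∧ α i ≤ 1)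
    (hinv : IsUnit (1 - (1 - Matrix.diagonal α) * P))
    (σin : Fin n → ℝ) (hσ0 : ∀ i, 0 ≤ σin i) (hσ1 : ∑ i, σin i = 1) :
    let Phat := (1 - Matrix.diagonal α) * P
    let Zhat := (1 - Phat)⁻¹
    let nref := Zhatᵀ *ᵥ σin
    let σout := fun j => α j * nref j
    let Γref := Matrix.diagonal σin * Zhat * Matrix.diagonal α
    (Zhat *ᵥ α = fun _ => (1 : ℝ)) ∧
      (∀ i, ∑ j, Γref i j = σin i) ∧
      (∀ j, ∑ i, Γref i j = σout j) ∧
      (∑ i, ∑ j, Γref i j = 1) :=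
  stmt2_general hP1 hinv hσ1
end

section
/- Let I and J be finite nonempty sets, c : I×J → ℝ, r : I×J → ℝ with r_{ij} > 0 for all i,j, T > 0, and let σ_in : I → ℝ and σ_out : J → ℝ be probability vectors (nonnegative entries summing to 1). Suppose there exist u : I → ℝ with u_i > 0 and v : J → ℝ with v_j > 0 such that the matrix γ*_{ij} = u_i · v_j · r_{ij} · exp(−c_{ij}/T) satisfies ∑_j γ*_{ij} = (σ_in)_i for every i and ∑_i γ*_{ij} = (σ_out)_j for every j. Then γ* is the unique minimizer of F(γ) = ∑_{i,j} γ_{ij}·c_{ij} + T·∑_{i,j} γ_{ij}·log(γ_{ij}/r_{ij}) over the transport polytope U(σ_in, σ_out). -/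
/-!
Taking logarithms in `γ* = u v r exp (-c / T)` gives `c - T log r = T (log u + log v - log γ*)`,
so that `F γ = T ∑ γ (log u + log v) + T ∑ γ log (γ / γ*)`. The first sum only sees the margins of
`γ`, hence is constant on the transport polytope, and so is the total mass. Therefore
`F γ = F γ* + T D(γ ‖ γ*)` on the polytope, where the Kullback–Leibler divergence `D` is nonnegative
and vanishes only at `γ = γ*`.
-/

open InformationTheory (klFun klFun_apply klFun_nonneg klFun_eq_zero_iff)

section KullbackLeibler

variable {ι : Type*} [Fintype ι] {p q : ι → ℝ}

/-- The generalized Kullback–Leibler divergence `∑ (p log (p / q) + q - p)` of two families of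
weights, which need not have the same total mass. Writing the summand as `q * klFun (p / q)` makes
its sign visible; this form is meant for `q` without zeros. -/
noncomputable def discreteKLDiv (p q : ι → ℝ) : ℝ :=
  ∑ x, q x * klFun (p x / q x)

theorem discreteKLDiv_eq_sum_mul_log (hq : ∀ x, q x ≠ 0) :
    discreteKLDiv p q = ∑ x, p x * Real.log (p x / q x) + ∑ x, q x - ∑ x, p x := by
  rw [discreteKLDiv, ← Finset.sum_add_distrib, ← Finset.sum_sub_distrib]
  refine Finset.sum_congr rfl fun x _ => ?_
  have := hq x
  rw [klFun_apply]
  field_simp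

theorem discreteKLDiv_nonneg (hp : ∀ x, 0 ≤ p x) (hq : ∀ x, 0 ≤ q x) : 0 ≤ discreteKLDiv p q :=
  Finset.sum_nonneg fun x _ => mul_nonneg (hq x) (klFun_nonneg (div_nonneg (hp x) (hq x)))

theorem discreteKLDiv_eq_zero_iff (hp : ∀ x, 0 ≤ p x) (hq : ∀ x, 0 < q x) :
    discreteKLDiv p q = 0 ↔ p = q := by
  have hpq : ∀ x, 0 ≤ p x / q x := fun x => div_nonneg (hp x) (hq x).le
  have hterm : ∀ x, q x * klFun (p x / q x) = 0 ↔ p x = q x := fun x => by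
    rw [mul_eq_zero_iff_left (hq x).ne', klFun_eq_zero_iff (hpq x), div_eq_one_iff_eq (hq x).ne']
  rw [discreteKLDiv, Fintype.sum_eq_zero_iff_of_nonneg
    fun x => mul_nonneg (hq x).le (klFun_nonneg (hpq x))]
  simp only [funext_iff, Pi.zero_apply, hterm]

end KullbackLeibler

section FreeEnergy

variable {ι : Type*} {w c r p : ι → ℝ} {T : ℝ}

/-- The Gibbs–Boltzmann weights at temperature `T` for the cost `c` and the reference weights `r`,
multiplied by scaling factors `w`; the numbers `T * log (w x)` play the role of the Lagrange
multipliers. -/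
noncomputable def gibbsWeight (w c r : ι → ℝ) (T : ℝ) (x : ι) : ℝ :=
  w x * r x * Real.exp (-c x / T)

theorem gibbsWeight_ne_zero {x : ι} (hw : w x ≠ 0) (hr : r x ≠ 0) : gibbsWeight w c r T x ≠ 0 :=
  mul_ne_zero (mul_ne_zero hw hr) (Real.exp_ne_zero _)

theorem gibbsWeight_pos {x : ι} (hw : 0 < w x) (hr : 0 < r x) : 0 < gibbsWeight w c r T x :=
  mul_pos (mul_pos hw hr) (Real.exp_pos _)

theorem log_gibbsWeight {x : ι} (hw : w x ≠ 0) (hr : r x ≠ 0) :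
    Real.log (gibbsWeight w c r T x) = Real.log (w x) + Real.log (r x) - c x / T := by
  rw [gibbsWeight, Real.log_mul (mul_ne_zero hw hr) (Real.exp_ne_zero _), Real.log_mul hw hr,
    Real.log_exp]
  ring

variable [Fintype ι]

/-- The free energy of the weights `p` at temperature `T`: their total cost plus `T` times their
relative entropy with respect to the reference weights `r`. A coupling of `I` and `J` is regarded as
a family of weights on `I × J` through `Function.uncurry`. -/
noncomputable def freeEnergy (c r : ι → ℝ) (T : ℝ) (p : ι → ℝ) : ℝ :=
  ∑ x, p x * c x + T * ∑ x, p x * Real.log (p x / r x)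

theorem freeEnergy_eq_sum_log_gibbsWeight (hT : T ≠ 0) (hw : ∀ x, w x ≠ 0) (hr : ∀ x, r x ≠ 0) :
    freeEnergy c r T p =
      T * (∑ x, p x * Real.log (w x) + ∑ x, p x * Real.log (p x / gibbsWeight w c r T x)) := by
  rw [freeEnergy, ← Finset.sum_add_distrib, Finset.mul_sum, Finset.mul_sum,
    ← Finset.sum_add_distrib]
  refine Finset.sum_congr rfl fun x _ => ?_
  rcases eq_or_ne (p x) 0 with hp | hp
  · simp [hp]
  · rw [Real.log_div hp (hr x), Real.log_div hp (gibbsWeight_ne_zero (hw x) (hr x)),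
      log_gibbsWeight (hw x) (hr x)]
    field_simp
    ring

theorem freeEnergy_eq_add_discreteKLDiv (hT : T ≠ 0) (hw : ∀ x, w x ≠ 0) (hr : ∀ x, r x ≠ 0)
    (hmass : ∑ x, p x = ∑ x, gibbsWeight w c r T x)
    (hlog : ∑ x, p x * Real.log (w x) = ∑ x, gibbsWeight w c r T x * Real.log (w x)) :
    freeEnergy c r T p =
      freeEnergy c r T (gibbsWeight w c r T) + T * discreteKLDiv p (gibbsWeight w c r T) := by
  have hg : ∀ x, gibbsWeight w c r T x ≠ 0 := fun x => gibbsWeight_ne_zero (hw x) (hr x)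
  rw [freeEnergy_eq_sum_log_gibbsWeight hT hw hr, freeEnergy_eq_sum_log_gibbsWeight hT hw hr,
    discreteKLDiv_eq_sum_mul_log hg, hmass, hlog]
  simp only [div_self (hg _), Real.log_one, mul_zero, Finset.sum_const_zero]
  ring

theorem freeEnergy_gibbsWeight_le (hT : 0 < T) (hw : ∀ x, 0 < w x) (hr : ∀ x, 0 < r x)
    (hp : ∀ x, 0 ≤ p x) (hmass : ∑ x, p x = ∑ x, gibbsWeight w c r T x)
    (hlog : ∑ x, p x * Real.log (w x) = ∑ x, gibbsWeight w c r T x * Real.log (w x)) :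
    freeEnergy c r T (gibbsWeight w c r T) ≤ freeEnergy c r T p := by
  rw [freeEnergy_eq_add_discreteKLDiv hT.ne' (fun x => (hw x).ne') (fun x => (hr x).ne') hmass hlog]
  exact le_add_of_nonneg_right <| mul_nonneg hT.le <|
    discreteKLDiv_nonneg hp fun x => (gibbsWeight_pos (hw x) (hr x)).le

theorem freeEnergy_eq_freeEnergy_gibbsWeight_iff (hT : T ≠ 0) (hw : ∀ x, 0 < w x)
    (hr : ∀ x, 0 < r x) (hp : ∀ x, 0 ≤ p x) (hmass : ∑ x, p x = ∑ x, gibbsWeight w c r T x)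
    (hlog : ∑ x, p x * Real.log (w x) = ∑ x, gibbsWeight w c r T x * Real.log (w x)) :
    freeEnergy c r T p = freeEnergy c r T (gibbsWeight w c r T) ↔ p = gibbsWeight w c r T := by
  rw [freeEnergy_eq_add_discreteKLDiv hT (fun x => (hw x).ne') (fun x => (hr x).ne') hmass hlog,
    add_eq_left, mul_eq_zero_iff_left hT,
    discreteKLDiv_eq_zero_iff hp fun x => gibbsWeight_pos (hw x) (hr x)]

end FreeEnergy

section Transport

open Function (uncurry uncurry_injective)

variable {I J : Type*} [Fintype I] [Fintype J] {σin : I → ℝ} {σout : J → ℝ} {γ γ' : I → J → ℝ}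

/-- The transport polytope `U(σin, σout)` of nonnegative matrices with row sums `σin` and column
sums `σout`. The margins are arbitrary vectors, not necessarily of total mass one. -/
def transportPolytope (σin : I → ℝ) (σout : J → ℝ) : Set (I → J → ℝ) :=
  {γ | (∀ i j, 0 ≤ γ i j) ∧ (∀ i, ∑ j, γ i j = σin i) ∧ ∀ j, ∑ i, γ i j = σout j}

theorem sum_mul_add_of_mem_transportPolytope (hγ : γ ∈ transportPolytope σin σout)
    (a : I → ℝ) (b : J → ℝ) :
    ∑ x : I × J, uncurry γ x * (a x.1 + b x.2) = ∑ i, σin i * a i + ∑ j, σout j * b j := by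
  obtain ⟨-, hrow, hcol⟩ := hγ
  simp only [mul_add, Finset.sum_add_distrib]
  rw [Fintype.sum_prod_type, Fintype.sum_prod_type_right]
  simp only [Function.uncurry_apply_pair, ← Finset.sum_mul, hrow, hcol]

theorem sum_eq_sum_of_mem_transportPolytope (hγ : γ ∈ transportPolytope σin σout)
    (hγ' : γ' ∈ transportPolytope σin σout) :
    ∑ x, uncurry γ x = ∑ x, uncurry γ' x := by
  simpa using (sum_mul_add_of_mem_transportPolytope hγ 1 0).trans
    (sum_mul_add_of_mem_transportPolytope hγ' 1 0).symm

theorem sum_mul_log_eq_of_mem_transportPolytope (hγ : γ ∈ transportPolytope σin σout)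
    (hγ' : γ' ∈ transportPolytope σin σout) {u : I → ℝ} {v : J → ℝ} (hu : ∀ i, u i ≠ 0)
    (hv : ∀ j, v j ≠ 0) :
    ∑ x : I × J, uncurry γ x * Real.log (u x.1 * v x.2) =
      ∑ x : I × J, uncurry γ' x * Real.log (u x.1 * v x.2) := by
  simp only [Real.log_mul (hu _) (hv _)]
  exact (sum_mul_add_of_mem_transportPolytope hγ (Real.log ∘ u) (Real.log ∘ v)).trans
    (sum_mul_add_of_mem_transportPolytope hγ' _ _).symm

theorem freeEnergy_uncurry (c r : I → J → ℝ) (T : ℝ) (γ : I → J → ℝ) :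
    freeEnergy (uncurry c) (uncurry r) T (uncurry γ) =
      ∑ i, ∑ j, γ i j * c i j + T * ∑ i, ∑ j, γ i j * Real.log (γ i j / r i j) := by
  simp only [freeEnergy, Fintype.sum_prod_type, Function.uncurry_apply_pair]

theorem stmt4_general {c r : I → J → ℝ} (hr : ∀ i j, 0 < r i j) {T : ℝ} (hT : 0 < T)
    {u : I → ℝ} {v : J → ℝ} (hu : ∀ i, 0 < u i) (hv : ∀ j, 0 < v j) {γstar : I → J → ℝ}
    (hγstar : ∀ i j, γstar i j = u i * v j * r i j * Real.exp (-(c i j) / T))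
    (hrow : ∀ i, ∑ j, γstar i j = σin i) (hcol : ∀ j, ∑ i, γstar i j = σout j) :
    γstar ∈ transportPolytope σin σout ∧
      (∀ γ ∈ transportPolytope σin σout,
        freeEnergy (uncurry c) (uncurry r) T (uncurry γstar) ≤
          freeEnergy (uncurry c) (uncurry r) T (uncurry γ)) ∧
      ∀ γ ∈ transportPolytope σin σout,
        freeEnergy (uncurry c) (uncurry r) T (uncurry γ) =
          freeEnergy (uncurry c) (uncurry r) T (uncurry γstar) → γ = γstar := by
  let w : I × J → ℝ := fun x => u x.1 * v x.2
  have hw : ∀ x, 0 < w x := fun x => mul_pos (hu x.1) (hv x.2)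
  have hr' : ∀ x, 0 < uncurry r x := fun x => hr x.1 x.2
  have hgibbs : uncurry γstar = gibbsWeight w (uncurry c) (uncurry r) T :=
    funext fun x => hγstar x.1 x.2
  have hmem : γstar ∈ transportPolytope σin σout :=
    ⟨fun i j => (gibbsWeight_pos (hw (i, j)) (hr' (i, j))).le.trans_eq
      (congrFun hgibbs (i, j)).symm, hrow, hcol⟩
  have hmass : ∀ γ ∈ transportPolytope σin σout, ∑ x, uncurry γ x = ∑ x, uncurry γstar x :=
    fun γ hγ => sum_eq_sum_of_mem_transportPolytope hγ hmem
  have hlog : ∀ γ ∈ transportPolytope σin σout,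
      ∑ x, uncurry γ x * Real.log (w x) = ∑ x, uncurry γstar x * Real.log (w x) := fun γ hγ =>
    sum_mul_log_eq_of_mem_transportPolytope hγ hmem (fun i => (hu i).ne') fun j => (hv j).ne'
  simp only [← uncurry_injective.eq_iff (b := γstar), hgibbs] at hmass hlog ⊢
  exact ⟨hmem, fun γ hγ => freeEnergy_gibbsWeight_le hT hw hr' (fun x => hγ.1 x.1 x.2)
      (hmass γ hγ) (hlog γ hγ),
    fun γ hγ => (freeEnergy_eq_freeEnergy_gibbsWeight_iff hT.ne' hw hr' (fun x => hγ.1 x.1 x.2)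
      (hmass γ hγ) (hlog γ hγ)).1⟩

end Transport

/-- If a Gibbs-form matrix `γ*_{ij} = u_i v_j r_{ij} exp(-c_{ij}/T)` (with `u, v` positive)
satisfies the margin constraints, then it is the unique minimizer of the free energy over
the transport polytope `U(σ_in, σ_out)`. -/
theorem stmt4 (I J : Type*) [Fintype I] [Fintype J] [Nonempty I] [Nonempty J]
    (c r : I → J → ℝ) (hr : ∀ i j, 0 < r i j) (T : ℝ) (hT : 0 < T)
    (σin : I → ℝ) (σout : J → ℝ)
    (hσin0 : ∀ i, 0 ≤ σin i) (hσin1 : ∑ i, σin i = 1)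
    (hσout0 : ∀ j, 0 ≤ σout j) (hσout1 : ∑ j, σout j = 1)
    (u : I → ℝ) (v : J → ℝ) (hu : ∀ i, 0 < u i) (hv : ∀ j, 0 < v j)
    (γstar : I → J → ℝ)
    (hγstar : ∀ i j, γstar i j = u i * v j * r i j * Real.exp (-(c i j) / T))
    (hrow : ∀ i, ∑ j, γstar i j = σin i)
    (hcol : ∀ j, ∑ i, γstar i j = σout j) :
    let U := fun γ : I → J → ℝ =>
      (∀ i j, 0 ≤ γ i j) ∧ (∀ i, ∑ j, γ i j = σin i) ∧ (∀ j, ∑ i, γ i j = σout j)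
    let F := fun γ : I → J → ℝ =>
      ∑ i, ∑ j, γ i j * c i j + T * ∑ i, ∑ j, γ i j * Real.log (γ i j / r i j)
    U γstar ∧ (∀ γ, U γ → F γstar ≤ F γ) ∧ (∀ γ, U γ → F γ = F γstar → γ = γstar) := by
  simpa only [freeEnergy_uncurry, transportPolytope, Set.mem_ofPred_eq] using
    stmt4_general hr hT hu hv hγstar hrow hcol
end

section
/- Let Ŵ be an n×n real matrix with nonnegative entries such that I − Ŵ is invertible, and let Ẑ = (I − Ŵ)^{-1}. Let σ_in, α, n̄_ref ∈ ℝ^n be nonnegative vectors and let μ_in, μ_out ∈ ℝ^n be positive vectors satisfying μ_in = 1 ÷ (Ẑ(μ_out ∘ α)) and μ_out = n̄_ref ÷ (Ẑ^⊤(μ_in ∘ σ_in)) (elementwise, with entrywise nonzero denominators). Define the flow n̄_{ij} = (n̄_ref)_i · Ŵ_{ij} / ((μ_out)_i · (μ_in)_j) and σ_out by (σ_out)_i = α_i·(n̄_ref)_i. Then the flow is conserved with sources σ_in and sinks σ_out: for every node i, ∑_j n̄_{ij} − ∑_j n̄_{ji} = (σ_in)_i − (σ_out)_i. -/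
/-
Put `u = Ẑ (μ_out ∘ α)` and `v = Ẑᵀ (μ_in ∘ σ_in)`. The fixed-point equations say `μ_in ∘ u = 1` and
`μ_out ∘ v = n̄_ref`, so the flow is the diagonal scaling `n̄ = diag(v) Ŵ diag(u)`. Adding and
subtracting `v ∘ u`, its net outflow is `(I - Ŵᵀ) v ∘ u - v ∘ (I - Ŵ) u`, and `u` and `v` solve the
linear systems with matrices `I - Ŵ` and `I - Ŵᵀ`, which turns this into
`μ_in ∘ σ_in ∘ u - v ∘ μ_out ∘ α = σ_in - n̄_ref ∘ α`.
-/

open Matrix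

section NetOutflow

variable {ι R : Type*} [Fintype ι]

/-- The net outflow (discrete divergence) at node `i` of an edge flow, where `N i j` is the flow
along the edge from `i` to `j`; it is positive at sources and negative at sinks. -/
def netOutflow [AddCommGroup R] (N : Matrix ι ι R) (i : ι) : R :=
  (∑ j, N i j) - ∑ j, N j i

variable [DecidableEq ι]

theorem netOutflow_diagonal_mul_mul_diagonal [Ring R] (v u : ι → R) (W : Matrix ι ι R) :
    netOutflow (diagonal v * W * diagonal u) = (v ᵥ* (1 - W)) * u - v * ((1 - W) *ᵥ u) := by
  ext i
  have outflow : ∑ j, (diagonal v * W * diagonal u) i j = v i * (W *ᵥ u) i := by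
    simp only [mul_diagonal, diagonal_mul, mulVec, dotProduct, Finset.mul_sum, mul_assoc]
  have inflow : ∑ j, (diagonal v * W * diagonal u) j i = (v ᵥ* W) i * u i := by
    simp only [mul_diagonal, diagonal_mul, vecMul, dotProduct, Finset.sum_mul]
  simp only [netOutflow, outflow, inflow, vecMul_sub, sub_mulVec, vecMul_one, one_mulVec,
    Pi.sub_apply, Pi.mul_apply]
  noncomm_ring

theorem netOutflow_diagonal_vecMul_inv_mul_mul_diagonal_inv_mulVec [CommRing R]
    {W : Matrix ι ι R} (hW : IsUnit (1 - W)) (a b : ι → R) :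
    netOutflow (diagonal (a ᵥ* (1 - W)⁻¹) * W * diagonal ((1 - W)⁻¹ *ᵥ b)) =
      a * ((1 - W)⁻¹ *ᵥ b) - (a ᵥ* (1 - W)⁻¹) * b := by
  have hdet : IsUnit (1 - W).det := (isUnit_iff_isUnit_det _).1 hW
  rw [netOutflow_diagonal_mul_mul_diagonal, vecMul_vecMul, nonsing_inv_mul _ hdet, vecMul_one,
    mulVec_mulVec, mul_nonsing_inv _ hdet, one_mulVec]

end NetOutflow

theorem stmt9_general {ι K : Type*} [Fintype ι] [DecidableEq ι] [Field K]
    {W Z : Matrix ι ι K} (hW : IsUnit (1 - W)) (hZ : Z = (1 - W)⁻¹)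
    {σin α nref μin μout : ι → K} (hμin : ∀ i, μin i ≠ 0) (hμout : ∀ i, μout i ≠ 0)
    (hfix_in : ∀ i, μin i = 1 / (Z *ᵥ (μout * α)) i)
    (hfix_out : ∀ i, μout i = nref i / (Zᵀ *ᵥ (μin * σin)) i)
    {N : Matrix ι ι K} (hN : ∀ i j, N i j = nref i * W i j / (μout i * μin j))
    {σout : ι → K} (hσout : ∀ i, σout i = α i * nref i) (i : ι) :
    netOutflow N i = σin i - σout i := by
  subst hZ
  simp only [mulVec_transpose] at hfix_out
  have netOutflow_scaling :=
    netOutflow_diagonal_vecMul_inv_mul_mul_diagonal_inv_mulVec hW (μin * σin) (μout * α)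
  set u := (1 - W)⁻¹ *ᵥ (μout * α)
  set v := (μin * σin) ᵥ* (1 - W)⁻¹
  have hu (j : ι) : u j = (μin j)⁻¹ := by rw [hfix_in, one_div, inv_inv]
  have hv_ne (j : ι) : v j ≠ 0 := (div_ne_zero_iff.1 (hfix_out j ▸ hμout j)).2
  have hv (j : ι) : nref j = μout j * v j := ((eq_div_iff (hv_ne j)).1 (hfix_out j)).symm
  have hN_scaling : N = diagonal v * W * diagonal u := by
    ext j k
    rw [hN, hv, mul_diagonal, diagonal_mul, hu]
    field_simp [hμout j]
  rw [hN_scaling, netOutflow_scaling, hσout, hv]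
  simp only [Pi.sub_apply, Pi.mul_apply, hu]
  field_simp [hμin i]

/-- Flow conservation: the expected edge flows form a flow emitted by the source distribution
`σ_in`, absorbed by the target distribution `σ_out = α ∘ n̄_ref`, and conserved elsewhere. -/
theorem stmt9 (n : ℕ) (What : Matrix (Fin n) (Fin n) ℝ)
    (hW : ∀ i j, 0 ≤ What i j) (hinv : IsUnit (1 - What))
    (Zhat : Matrix (Fin n) (Fin n) ℝ) (hZ : Zhat = (1 - What)⁻¹)
    (σin α nref : Fin n → ℝ)
    (hσ : ∀ i, 0 ≤ σin i) (hα : ∀ i, 0 ≤ α i) (hnref : ∀ i, 0 ≤ nref i)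
    (μin μout : Fin n → ℝ) (hμin : ∀ i, 0 < μin i) (hμout : ∀ i, 0 < μout i)
    (hd1 : ∀ i, (Zhat *ᵥ (μout * α)) i ≠ 0)
    (hd2 : ∀ i, (Zhatᵀ *ᵥ (μin * σin)) i ≠ 0)
    (hfix1 : ∀ i, μin i = 1 / (Zhat *ᵥ (μout * α)) i)
    (hfix2 : ∀ i, μout i = nref i / (Zhatᵀ *ᵥ (μin * σin)) i)
    (N : Matrix (Fin n) (Fin n) ℝ)
    (hN : ∀ i j, N i j = nref i * What i j / (μout i * μin j))
    (σout : Fin n → ℝ) (hσout : ∀ i, σout i = α i * nref i) :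
    ∀ i, (∑ j, N i j) - (∑ j, N j i) = σin i - σout i := by
  exact stmt9_general hinv hZ (fun i => (hμin i).ne') (fun i => (hμout i).ne') hfix1 hfix2 hN hσout
end

section
/- Let W be an n×n real matrix with nonnegative entries whose Neumann series ∑_{t=0}^∞ W^t converges, and let Z = ∑_{t=0}^∞ W^t = (I − W)^{-1}. Fix an index j, let Q be the (n−1)×(n−1) principal submatrix of W obtained by deleting row j and column j, and let q be the j-th column of W restricted to the indices different from j. Then the Neumann series ∑_{t=0}^∞ Q^t converges, I − Q is invertible, and for every i ≠ j, Z_{ij} = ((I − Q)^{-1} q)_i · Z_{jj}. -/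
open Matrix

/-!
Entrywise nonnegativity gives `(Q ^ t) a b ≤ (W ^ t) a b`, since the left side sums the weights of
only those walks that avoid the deleted indices; so the Neumann series of `Q` converges by
comparison. The first-passage formula is then one block of the renewal equation `Z = 1 + W * Z`:
writing `2` for the target indices and `1` for the others, it reads
`(1 - Q) * Z₁₂ = W₁₂ * Z₂₂`, and `1 - Q` is invertible.
-/

theorem isUnit_one_sub_of_summable_pow_s11 {R : Type*} [Ring R] [TopologicalSpace R]
    [IsTopologicalRing R] [T2Space R] {x : R} (h : Summable (x ^ ·)) : IsUnit (1 - x) :=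
  ⟨⟨1 - x, ∑' t, x ^ t, h.one_sub_mul_tsum_pow, h.tsum_pow_mul_one_sub⟩, rfl⟩

section Submatrix

variable {m n : Type*} [Fintype m] [DecidableEq m] [Fintype n] [DecidableEq n]

theorem submatrix_pow_apply_le_pow_apply {R : Type*} [Semiring R] [PartialOrder R]
    [IsOrderedRing R] {W : Matrix n n R} (hW : ∀ i j, 0 ≤ W i j) (e : m ↪ n) (t : ℕ) (a b : m) :
    (W.submatrix e e ^ t) a b ≤ (W ^ t) (e a) (e b) := by
  induction t generalizing b with
  | zero => simp only [pow_zero, one_apply, e.injective.eq_iff, le_refl]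
  | succ t ih =>
    have term_nonneg (x : n) : 0 ≤ (W ^ t) (e a) x * W x (e b) :=
      mul_nonneg (pow_apply_nonneg hW t _ _) (hW _ _)
    calc (W.submatrix e e ^ (t + 1)) a b
        = ∑ c, (W.submatrix e e ^ t) a c * W (e c) (e b) := by
          simp only [pow_succ, mul_apply, submatrix_apply]
      _ ≤ ∑ c, (W ^ t) (e a) (e c) * W (e c) (e b) :=
          Finset.sum_le_sum fun c _ => mul_le_mul_of_nonneg_right (ih c) (hW _ _)
      _ = ∑ x ∈ Finset.univ.map e, (W ^ t) (e a) x * W x (e b) := by rw [Finset.sum_map]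
      _ ≤ ∑ x, (W ^ t) (e a) x * W x (e b) := Finset.sum_le_univ_sum_of_nonneg term_nonneg
      _ = (W ^ (t + 1)) (e a) (e b) := by rw [pow_succ, mul_apply]

theorem summable_submatrix_pow {W : Matrix n n ℝ} (hW : ∀ i j, 0 ≤ W i j)
    (hsum : Summable (W ^ ·)) (e : m ↪ n) : Summable (W.submatrix e e ^ ·) := by
  refine Pi.summable.2 fun a => Pi.summable.2 fun b => ?_
  have entry_summable : Summable fun t => (W ^ t) (e a) (e b) :=
    Pi.summable.1 (Pi.summable.1 hsum (e a)) (e b)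
  exact entry_summable.of_nonneg_of_le (pow_apply_nonneg (fun _ _ => hW _ _) · a b)
    (submatrix_pow_apply_le_pow_apply hW e · a b)

end Submatrix

section FirstPassage

variable {n : Type*} [Fintype n] [DecidableEq n]

theorem one_sub_toBlock_mul_toBlock {R : Type*} [CommRing R] {W Z : Matrix n n R}
    (hZ : (1 - W) * Z = 1) (r : n → Prop) [DecidablePred r] :
    (1 - W.toBlock (¬ r ·) (¬ r ·)) * Z.toBlock (¬ r ·) r =
      W.toBlock (¬ r ·) r * Z.toBlock r r := by
  have renewal : Z = 1 + W * Z := by rwa [sub_mul, one_mul, sub_eq_iff_eq_add] at hZ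
  have one_block : (1 : Matrix n n R).toBlock (¬ r ·) r = 0 :=
    toBlock_one_disjoint disjoint_compl_left
  rw [Matrix.sub_mul, Matrix.one_mul, sub_eq_iff_eq_add]
  calc Z.toBlock (¬ r ·) r
      = (1 : Matrix n n R).toBlock (¬ r ·) r + (W * Z).toBlock (¬ r ·) r :=
        congrArg (toBlock · (¬ r ·) r) renewal
    _ = W.toBlock (¬ r ·) r * Z.toBlock r r +
          W.toBlock (¬ r ·) (¬ r ·) * Z.toBlock (¬ r ·) r := by
        rw [one_block, zero_add, toBlock_mul_eq_add (¬ r ·) r r]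

theorem stmt11_general (W : Matrix n n ℝ) (hW : ∀ i j, 0 ≤ W i j) (hsum : Summable (W ^ ·))
    (Z : Matrix n n ℝ) (hZ : Z = ∑' t : ℕ, W ^ t) (r : n → Prop) [DecidablePred r] :
    Summable (W.toBlock (¬ r ·) (¬ r ·) ^ ·) ∧ IsUnit (1 - W.toBlock (¬ r ·) (¬ r ·)) ∧
      Z.toBlock (¬ r ·) r =
        (1 - W.toBlock (¬ r ·) (¬ r ·))⁻¹ * W.toBlock (¬ r ·) r * Z.toBlock r r := by
  have hQsum : Summable (W.toBlock (¬ r ·) (¬ r ·) ^ ·) :=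
    summable_submatrix_pow hW hsum (.subtype (¬ r ·))
  have hunit := isUnit_one_sub_of_summable_pow_s11 hQsum
  have hWZ : (1 - W) * Z = 1 := hZ ▸ hsum.one_sub_mul_tsum_pow
  refine ⟨hQsum, hunit, ?_⟩
  rw [Matrix.mul_assoc, ← one_sub_toBlock_mul_toBlock hWZ r,
    nonsing_inv_mul_cancel_left _ _ ((isUnit_iff_isUnit_det _).1 hunit)]

end FirstPassage

/-- First-passage decomposition: `Z_{ij} = ((I - Q)⁻¹ q)_i · Z_{jj}` where `Q` is the principal
submatrix of `W` deleting row and column `j`, and `q` is the `j`-th column of `W` restricted to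
the other indices. -/
theorem stmt11 (n : ℕ) (W : Matrix (Fin n) (Fin n) ℝ)
    (hW : ∀ i j, 0 ≤ W i j)
    (hsum : Summable (fun t : ℕ => W ^ t))
    (Z : Matrix (Fin n) (Fin n) ℝ) (hZ : Z = ∑' t : ℕ, W ^ t)
    (hZinv : Z = (1 - W)⁻¹)
    (j : Fin n)
    (Q : Matrix {i : Fin n // i ≠ j} {i : Fin n // i ≠ j} ℝ)
    (hQ : ∀ a b : {i : Fin n // i ≠ j}, Q a b = W a.1 b.1)
    (q : {i : Fin n // i ≠ j} → ℝ) (hq : ∀ a : {i : Fin n // i ≠ j}, q a = W a.1 j) :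
    Summable (fun t : ℕ => Q ^ t) ∧ IsUnit (1 - Q) ∧
      ∀ i : Fin n, ∀ hi : i ≠ j,
        Z i j = ((1 - Q)⁻¹ *ᵥ q) ⟨i, hi⟩ * Z j j := by
  obtain rfl : Q = W.toBlock (¬ · = j) (¬ · = j) := ext hQ
  obtain rfl : q = fun a => W a.1 j := funext hq
  obtain ⟨hQsum, hunit, hpassage⟩ := stmt11_general W hW hsum Z hZ (· = j)
  refine ⟨hQsum, hunit, fun i hi => ?_⟩
  have hfactor := congrFun₂ hpassage ⟨i, hi⟩ ⟨j, rfl⟩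
  simp only [Matrix.mul_apply, Finset.univ_unique, Finset.sum_singleton] at hfactor
  exact hfactor
end

section
/- Let W be an n×n real matrix with nonnegative entries whose Neumann series ∑_{t=0}^∞ W^t converges, and let Z = ∑_{t=0}^∞ W^t = (I − W)^{-1}. Then for all indices i, j, k: Z_{ik} · Z_{kj} ≤ Z_{ij} · Z_{kk}. -/
open Matrix

/-!
Discrete minimum principle: if `W ≥ 0` entrywise and `W ^ t → 0`, then `x ≤ W x` gives
`x ≤ W ^ t x → 0`, so `x ≤ 0`. With `x` the negative part of `v`, this shows that `v ≥ 0` as soon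
as `v ≥ W v` at the indices where `v` is negative. The vector `v i = Z i j * Z k k - Z i k * Z k j`
vanishes at `k`, and for `i ≠ k` the relation `Z = 1 + W Z` gives `v i - (W v) i = δ i j * Z k k`.
The same principle applied to the columns of `Z` shows `Z k k ≥ 0`, hence `v ≥ 0`.
-/

section MinimumPrinciple

variable {ι R : Type*} [Fintype ι]

theorem mulVec_monotone_of_nonneg {κ : Type*} [Semiring R] [PartialOrder R] [IsOrderedRing R]
    {W : Matrix κ ι R} (hW : ∀ i j, 0 ≤ W i j) : Monotone (W *ᵥ ·) :=
  fun _ _ hxy i => dotProduct_le_dotProduct_of_nonneg_left hxy (hW i)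

variable [DecidableEq ι]

theorem le_pow_mulVec_of_le_mulVec [Semiring R] [PartialOrder R] [IsOrderedRing R]
    {W : Matrix ι ι R} (hW : ∀ i j, 0 ≤ W i j) {x : ι → R} (hx : x ≤ W *ᵥ x) (t : ℕ) :
    x ≤ W ^ t *ᵥ x := by
  induction t with
  | zero => rw [pow_zero, one_mulVec]
  | succ t ih =>
    calc x ≤ W *ᵥ x := hx
      _ ≤ W *ᵥ (W ^ t *ᵥ x) := mulVec_monotone_of_nonneg hW ih
      _ = W ^ (t + 1) *ᵥ x := by rw [mulVec_mulVec, pow_succ']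

variable [TopologicalSpace R]

theorem nonpos_of_le_mulVec [Semiring R] [PartialOrder R] [IsOrderedRing R]
    [IsTopologicalSemiring R] [OrderClosedTopology R] {W : Matrix ι ι R}
    (hW : ∀ i j, 0 ≤ W i j) (hlim : IsTopologicallyNilpotent W) {x : ι → R}
    (hx : x ≤ W *ᵥ x) : x ≤ 0 := by
  have hcont : Continuous fun A : Matrix ι ι R => A *ᵥ x :=
    continuous_id.matrix_mulVec continuous_const
  have htendsto : Filter.Tendsto (fun t : ℕ => W ^ t *ᵥ x) Filter.atTop (nhds 0) :=
    (hcont.tendsto' 0 0 (zero_mulVec x)).comp hlim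
  exact ge_of_tendsto' htendsto (le_pow_mulVec_of_le_mulVec hW hx)

theorem nonneg_of_mulVec_le_of_neg [Ring R] [LinearOrder R] [IsOrderedRing R]
    [IsTopologicalSemiring R] [OrderClosedTopology R] {W : Matrix ι ι R}
    (hW : ∀ i j, 0 ≤ W i j) (hlim : IsTopologicallyNilpotent W) {v : ι → R}
    (hv : ∀ i, v i < 0 → (W *ᵥ v) i ≤ v i) : 0 ≤ v := by
  have hsub : v⁻ ≤ W *ᵥ v⁻ := by
    intro i
    rcases le_or_gt 0 (v i) with hi | hi
    · calc v⁻ i = (W *ᵥ 0) i := by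
            rw [mulVec_zero, Pi.negPart_apply, negPart_eq_zero.mpr hi, Pi.zero_apply]
        _ ≤ (W *ᵥ v⁻) i := mulVec_monotone_of_nonneg hW (negPart_nonneg v) i
    · calc v⁻ i = -v i := by rw [Pi.negPart_apply, negPart_eq_neg.mpr hi.le]
        _ ≤ -(W *ᵥ v) i := neg_le_neg (hv i hi)
        _ = (W *ᵥ (-v)) i := by rw [mulVec_neg, Pi.neg_apply]
        _ ≤ (W *ᵥ v⁻) i := mulVec_monotone_of_nonneg hW (neg_le_negPart v) i
  have hzero : v⁻ = 0 := le_antisymm (nonpos_of_le_mulVec hW hlim hsub) (negPart_nonneg v)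
  exact negPart_eq_zero.mp hzero

end MinimumPrinciple

section FundamentalMatrix

variable {ι R : Type*} [Fintype ι] [DecidableEq ι]

theorem mulVec_col_of_one_sub_mul_eq_one [Ring R] {W Z : Matrix ι ι R} (hZ : (1 - W) * Z = 1)
    (j : ι) : W *ᵥ Z.col j = Z.col j - Pi.single j 1 := by
  have hWZ : W * Z = Z - 1 := by rw [← hZ, one_sub_mul, sub_sub_cancel]
  calc W *ᵥ Z.col j = (W * Z) *ᵥ Pi.single j 1 := by rw [← mulVec_mulVec, mulVec_single_one]
    _ = Z.col j - Pi.single j 1 := by rw [hWZ, sub_mulVec, one_mulVec, mulVec_single_one]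

variable [LinearOrder R] [TopologicalSpace R] [OrderClosedTopology R]

theorem apply_nonneg_of_one_sub_mul_eq_one [Ring R] [IsOrderedRing R] [IsTopologicalSemiring R]
    {W Z : Matrix ι ι R} (hW : ∀ i j, 0 ≤ W i j) (hlim : IsTopologicallyNilpotent W)
    (hZ : (1 - W) * Z = 1) (i j : ι) : 0 ≤ Z i j := by
  refine nonneg_of_mulVec_le_of_neg hW hlim (v := Z.col j) (fun a _ => ?_) i
  have hsingle : (0 : ι → R) ≤ Pi.single j 1 := Pi.single_nonneg.mpr zero_le_one
  rw [mulVec_col_of_one_sub_mul_eq_one hZ]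
  exact sub_le_self _ (hsingle a)

theorem stmt12_general [CommRing R] [IsOrderedRing R] [IsTopologicalSemiring R]
    {W Z : Matrix ι ι R} (hW : ∀ i j, 0 ≤ W i j) (hlim : IsTopologicallyNilpotent W)
    (hZ : (1 - W) * Z = 1) (i j k : ι) : Z i k * Z k j ≤ Z i j * Z k k := by
  let v : ι → R := Z k k • Z.col j - Z k j • Z.col k
  have hv_apply (a : ι) : v a = Z a j * Z k k - Z a k * Z k j := by
    simp only [v, Pi.sub_apply, Pi.smul_apply, smul_eq_mul, col_apply, mul_comm]
  have hWv : W *ᵥ v = v - Z k k • Pi.single j 1 + Z k j • Pi.single k 1 := by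
    simp only [v, mulVec_sub, mulVec_smul, mulVec_col_of_one_sub_mul_eq_one hZ, smul_sub]
    abel
  have hv : 0 ≤ v := by
    refine nonneg_of_mulVec_le_of_neg hW hlim fun a ha => ?_
    have hak : a ≠ k := by
      rintro rfl
      rw [hv_apply, mul_comm, sub_self] at ha
      exact ha.false
    have hsource : 0 ≤ Z k k * (Pi.single j 1 : ι → R) a :=
      mul_nonneg (apply_nonneg_of_one_sub_mul_eq_one hW hlim hZ k k)
        ((Pi.single_nonneg.mpr zero_le_one : (0 : ι → R) ≤ Pi.single j 1) a)
    calc (W *ᵥ v) a = v a - Z k k * (Pi.single j 1 : ι → R) a := by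
          simp only [hWv, Pi.add_apply, Pi.sub_apply, Pi.smul_apply, smul_eq_mul,
            Pi.single_eq_of_ne hak, mul_zero, add_zero]
      _ ≤ v a := sub_le_self _ hsource
  exact sub_nonneg.mp (hv_apply i ▸ hv i)

end FundamentalMatrix

/-- For the fundamental matrix `Z = ∑ W^t = (I - W)⁻¹` of a nonnegative matrix `W`,
`Z_{ik} Z_{kj} ≤ Z_{ij} Z_{kk}`. -/
theorem stmt12 (n : ℕ) (W : Matrix (Fin n) (Fin n) ℝ)
    (hW : ∀ i j, 0 ≤ W i j)
    (hsum : Summable (fun t : ℕ => W ^ t))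
    (Z : Matrix (Fin n) (Fin n) ℝ) (hZ : Z = ∑' t : ℕ, W ^ t)
    (hZinv : Z = (1 - W)⁻¹)
    (i j k : Fin n) :
    Z i k * Z k j ≤ Z i j * Z k k :=
  stmt12_general hW hsum.tendsto_atTop_zero (hZ ▸ hsum.one_sub_mul_tsum_pow) i j k
end

section
/- Let n ≥ 2, let W be an n×n real matrix with nonnegative entries whose Neumann series converges with sum Z = (I − W)^{-1}, and let a, b ∈ ℝ^n be positive vectors. Define γ_{ij} = a_i · b_j · Z_{ij} and assume γ_{ij} > 0 for all i, j and ∑_{i,j} γ_{ij} = 1. Define Δ_{ij} = −(log γ_{ij} + log γ_{ji})/2 for i ≠ j and Δ_{ii} = 0. Then Δ is a distance metric on {1,…,n}: Δ_{ij} ≥ 0 for all i, j, with Δ_{ij} = 0 if and only if i = j; Δ_{ij} = Δ_{ji} for all i, j; and Δ_{ij} ≤ Δ_{ik} + Δ_{kj} for all i, j, k. -/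
/-!
Relative to an index `k`, the minors `v i = Z i j * Z k k - Z i k * Z k j` of the fundamental
matrix satisfy `(1 - W) v = Z k k • e_j - Z k j • e_k`, so `v` is superharmonic for `W` away from
`k`, while `v k = 0`. The minimum principle gives `v ≥ 0`, and superharmonicity at `j ≠ k` improves
this to `v j ≥ Z k k > 0`. Diagonal scaling preserves both inequalities:
`γ i k * γ k j ≤ γ i j * γ k k`, and `γ i j * γ j i < γ i i * γ j j` for `i ≠ j`. Once `γ k k ≤ 1`,
logarithms turn the first one into the triangle inequality and the second one into the separation
of points.
-/

open Matrix

theorem apply_le_sum_sum {ι κ M : Type*} [Fintype ι] [Fintype κ] [AddCommMonoid M] [PartialOrder M]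
    [IsOrderedAddMonoid M] {f : ι → κ → M} (hf : ∀ i j, 0 ≤ f i j) (i : ι) (j : κ) :
    f i j ≤ ∑ i, ∑ j, f i j :=
  (Finset.single_le_sum (fun j _ => hf i j) (Finset.mem_univ j)).trans <|
    Finset.single_le_sum (f := fun i => ∑ j, f i j)
      (fun i _ => Finset.sum_nonneg fun j _ => hf i j) (Finset.mem_univ i)

section FundamentalMatrix

variable {ι R : Type*} [Fintype ι] [DecidableEq ι] [CommRing R]

/-- The minors of `Z` with rows `i, k` and columns `j, k`, as a vector indexed by `i`. They measure
how far the entries of `Z` are from factoring through `k`. -/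
def pivotMinor (Z : Matrix ι ι R) (j k : ι) : ι → R :=
  fun i => Z i j * Z k k - Z i k * Z k j

/-- The coupling matrix of the margin-constrained bag-of-paths model, with Lagrange scaling factors
`a`, `b` and fundamental matrix `Z`. -/
def coupling (a b : ι → R) (Z : Matrix ι ι R) : Matrix ι ι R :=
  of fun i j => a i * b j * Z i j

theorem pivotMinor_eq_mulVec (Z : Matrix ι ι R) (j k : ι) :
    pivotMinor Z j k = Z *ᵥ (Z k k • Pi.single j 1 - Z k j • Pi.single k 1) := by
  ext i
  simp [pivotMinor, mulVec_sub, mulVec_smul, mul_comm]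

section PartialOrder

variable [PartialOrder R]

/-- `Z` is the fundamental matrix `(1 - W)⁻¹` of the nonnegative matrix `W`. Convergence of the
Neumann series enters through the nonnegativity of the inverse, which makes the definition
meaningful without a topology on `R`. -/
structure IsFundamentalMatrix (W Z : Matrix ι ι R) : Prop where
  weight_nonneg : ∀ i j, 0 ≤ W i j
  apply_nonneg : ∀ i j, 0 ≤ Z i j
  mul_one_sub : Z * (1 - W) = 1

theorem isFundamentalMatrix_tsum_pow [IsOrderedRing R] [TopologicalSpace R] [IsTopologicalRing R]
    [OrderClosedTopology R] {W : Matrix ι ι R} (hW : ∀ i j, 0 ≤ W i j)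
    (hsum : Summable fun t : ℕ => W ^ t) : IsFundamentalMatrix W (∑' t : ℕ, W ^ t) where
  weight_nonneg := hW
  apply_nonneg i j :=
    (Pi.hasSum.1 (Pi.hasSum.1 hsum.hasSum i) j).nonneg fun t => pow_apply_nonneg hW t i j
  mul_one_sub := hsum.tsum_pow_mul_one_sub

namespace IsFundamentalMatrix

variable {W Z : Matrix ι ι R}

theorem one_sub_mul (hZ : IsFundamentalMatrix W Z) : (1 - W) * Z = 1 :=
  mul_eq_one_comm.1 hZ.mul_one_sub

theorem pivotMinor_apply_of_ne (hZ : IsFundamentalMatrix W Z) {i k : ι} (j : ι) (hik : i ≠ k) :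
    pivotMinor Z j k i = (if i = j then Z k k else 0) + (W *ᵥ pivotMinor Z j k) i := by
  have hmul : (1 - W) *ᵥ pivotMinor Z j k = Z k k • Pi.single j 1 - Z k j • Pi.single k 1 := by
    rw [pivotMinor_eq_mulVec, mulVec_mulVec, hZ.one_sub_mul, one_mulVec]
  rw [sub_mulVec, one_mulVec] at hmul
  simpa [Pi.single_apply, hik, sub_eq_iff_eq_add] using congrFun hmul i

theorem diag_pos [IsStrictOrderedRing R] (hZ : IsFundamentalMatrix W Z) (i : ι) : 0 < Z i i := by
  have hrec : Z = 1 + W * Z := by rw [← hZ.one_sub_mul]; noncomm_ring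
  rw [hrec, Matrix.add_apply, one_apply_eq, mul_apply]
  exact add_pos_of_pos_of_nonneg one_pos <|
    Finset.sum_nonneg fun l _ => mul_nonneg (hZ.weight_nonneg i l) (hZ.apply_nonneg l i)

theorem nonpos_of_le_mulVec [IsOrderedRing R] (hZ : IsFundamentalMatrix W Z) {u : ι → R}
    (hu : u ≤ W *ᵥ u) : u ≤ 0 := by
  have hsub : (1 - W) *ᵥ u ≤ 0 := by
    rw [sub_mulVec, one_mulVec]
    exact sub_nonpos.2 hu
  calc u = Z *ᵥ ((1 - W) *ᵥ u) := by rw [mulVec_mulVec, hZ.mul_one_sub, one_mulVec]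
    _ ≤ Z *ᵥ 0 := fun i => dotProduct_le_dotProduct_of_nonneg_left hsub (hZ.apply_nonneg i)
    _ = 0 := mulVec_zero Z

end IsFundamentalMatrix

end PartialOrder

section LinearOrder

variable [LinearOrder R] [IsStrictOrderedRing R] {W Z : Matrix ι ι R} {a b : ι → R}

namespace IsFundamentalMatrix

theorem nonneg_of_mulVec_le_off (hZ : IsFundamentalMatrix W Z) {v : ι → R} {s : Set ι}
    (hs : ∀ i ∈ s, 0 ≤ v i) (hv : ∀ i ∉ s, (W *ᵥ v) i ≤ v i) : 0 ≤ v := by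
  have hneg : v⁻ ≤ W *ᵥ v⁻ := fun i => by
    rcases le_or_gt 0 (v i) with hi | hi
    · rw [Pi.negPart_apply, negPart_eq_zero.2 hi]
      exact dotProduct_nonneg_of_nonneg (hZ.weight_nonneg i) (negPart_nonneg v)
    · have his : i ∉ s := fun his => hi.not_ge (hs i his)
      calc v⁻ i = -v i := by rw [Pi.negPart_apply, negPart_eq_neg.2 hi.le]
        _ ≤ -(W *ᵥ v) i := neg_le_neg (hv i his)
        _ = (W *ᵥ -v) i := by rw [mulVec_neg, Pi.neg_apply]
        _ ≤ (W *ᵥ v⁻) i :=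
          dotProduct_le_dotProduct_of_nonneg_left (neg_le_negPart v) (hZ.weight_nonneg i)
  exact negPart_nonpos.1 (hZ.nonpos_of_le_mulVec hneg)

theorem pivotMinor_nonneg (hZ : IsFundamentalMatrix W Z) (j k : ι) : 0 ≤ pivotMinor Z j k := by
  refine hZ.nonneg_of_mulVec_le_off (s := {k}) ?_ fun i hik => ?_
  · rintro _ rfl
    rw [pivotMinor, mul_comm, sub_self]
  · rw [hZ.pivotMinor_apply_of_ne j hik]
    exact le_add_of_nonneg_left (ite_nonneg (hZ.apply_nonneg k k) le_rfl)

theorem mul_le_mul_diag (hZ : IsFundamentalMatrix W Z) (i j k : ι) :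
    Z i k * Z k j ≤ Z i j * Z k k :=
  sub_nonneg.1 (hZ.pivotMinor_nonneg j k i)

theorem mul_swap_lt_mul_diag (hZ : IsFundamentalMatrix W Z) {i j : ι} (hij : i ≠ j) :
    Z i j * Z j i < Z i i * Z j j := by
  have hpos : 0 < pivotMinor Z i j i := by
    rw [hZ.pivotMinor_apply_of_ne i hij, if_pos rfl]
    exact add_pos_of_pos_of_nonneg (hZ.diag_pos j) <|
      dotProduct_nonneg_of_nonneg (hZ.weight_nonneg i) (hZ.pivotMinor_nonneg i j)
  exact sub_pos.1 hpos

theorem coupling_mul_le_mul_diag (hZ : IsFundamentalMatrix W Z) (ha : ∀ i, 0 ≤ a i)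
    (hb : ∀ i, 0 ≤ b i) (i j k : ι) :
    coupling a b Z i k * coupling a b Z k j ≤ coupling a b Z i j * coupling a b Z k k := by
  have hscale : 0 ≤ a i * b k * (a k * b j) :=
    mul_nonneg (mul_nonneg (ha i) (hb k)) (mul_nonneg (ha k) (hb j))
  have h := mul_le_mul_of_nonneg_left (hZ.mul_le_mul_diag i j k) hscale
  simp only [coupling, of_apply]
  linarith

theorem coupling_mul_swap_lt_mul_diag (hZ : IsFundamentalMatrix W Z) (ha : ∀ i, 0 < a i)
    (hb : ∀ i, 0 < b i) {i j : ι} (hij : i ≠ j) :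
    coupling a b Z i j * coupling a b Z j i < coupling a b Z i i * coupling a b Z j j := by
  have hscale : 0 < a i * b j * (a j * b i) :=
    mul_pos (mul_pos (ha i) (hb j)) (mul_pos (ha j) (hb i))
  have h := mul_lt_mul_of_pos_left (hZ.mul_swap_lt_mul_diag hij) hscale
  simp only [coupling, of_apply]
  linarith

end IsFundamentalMatrix

end LinearOrder

end FundamentalMatrix

section SurprisalDist

variable {ι : Type*} [DecidableEq ι] {γ : Matrix ι ι ℝ} {i j : ι}

/-- The surprisal distance of the matrix `γ` of joint probabilities of the endpoints of a path. -/
noncomputable def surprisalDist (γ : Matrix ι ι ℝ) : Matrix ι ι ℝ :=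
  of fun i j => if i = j then 0 else -(Real.log (γ i j) + Real.log (γ j i)) / 2

theorem surprisalDist_self (γ : Matrix ι ι ℝ) (i : ι) : surprisalDist γ i i = 0 :=
  if_pos rfl

theorem surprisalDist_of_ne (γ : Matrix ι ι ℝ) (hij : i ≠ j) :
    surprisalDist γ i j = -(Real.log (γ i j) + Real.log (γ j i)) / 2 :=
  if_neg hij

theorem surprisalDist_comm (γ : Matrix ι ι ℝ) (i j : ι) :
    surprisalDist γ i j = surprisalDist γ j i := by
  simp only [surprisalDist, of_apply, eq_comm, add_comm]

theorem surprisalDist_nonneg (hij : 0 < γ i j) (hji : 0 < γ j i) (hle : γ i j * γ j i ≤ 1) :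
    0 ≤ surprisalDist γ i j := by
  rcases eq_or_ne i j with rfl | hne
  · exact (surprisalDist_self γ i).ge
  · have hlog := Real.log_nonpos (mul_pos hij hji).le hle
    rw [Real.log_mul hij.ne' hji.ne'] at hlog
    rw [surprisalDist_of_ne γ hne]
    linarith

theorem surprisalDist_pos (hne : i ≠ j) (hij : 0 < γ i j) (hji : 0 < γ j i)
    (hlt : γ i j * γ j i < 1) : 0 < surprisalDist γ i j := by
  have hlog := Real.log_neg (mul_pos hij hji) hlt
  rw [Real.log_mul hij.ne' hji.ne'] at hlog
  rw [surprisalDist_of_ne γ hne]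
  linarith

theorem surprisalDist_triangle (hpos : ∀ i j, 0 < γ i j)
    (hmul : ∀ i j k, γ i k * γ k j ≤ γ i j) (i j k : ι) :
    surprisalDist γ i j ≤ surprisalDist γ i k + surprisalDist γ k j := by
  have hdiag : ∀ l, γ l l ≤ 1 := fun l => (mul_le_iff_le_one_left (hpos l l)).1 (hmul l l l)
  have hnonneg : ∀ p q, 0 ≤ surprisalDist γ p q := fun p q =>
    surprisalDist_nonneg (hpos p q) (hpos q p) ((hmul p p q).trans (hdiag p))
  have hlog : ∀ p q, Real.log (γ p k) + Real.log (γ k q) ≤ Real.log (γ p q) := fun p q => by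
    rw [← Real.log_mul (hpos p k).ne' (hpos k q).ne']
    exact Real.log_le_log (mul_pos (hpos p k) (hpos k q)) (hmul p q k)
  rcases eq_or_ne i j with rfl | hij
  · rw [surprisalDist_self]
    exact add_nonneg (hnonneg i k) (hnonneg k i)
  rcases eq_or_ne i k with rfl | hik
  · rw [surprisalDist_self, zero_add]
  rcases eq_or_ne k j with rfl | hkj
  · rw [surprisalDist_self, add_zero]
  rw [surprisalDist_of_ne γ hij, surprisalDist_of_ne γ hik, surprisalDist_of_ne γ hkj]
  linarith [hlog i j, hlog j i]

end SurprisalDist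

theorem stmt13_general {ι : Type*} [Fintype ι] [DecidableEq ι] {W : Matrix ι ι ℝ}
    (hW : ∀ i j, 0 ≤ W i j) (hsum : Summable fun t : ℕ => W ^ t)
    {Z : Matrix ι ι ℝ} (hZ : Z = ∑' t : ℕ, W ^ t)
    {a b : ι → ℝ} (ha : ∀ i, 0 < a i) (hb : ∀ i, 0 < b i)
    {γ : Matrix ι ι ℝ} (hγdef : ∀ i j, γ i j = a i * b j * Z i j)
    (hγpos : ∀ i j, 0 < γ i j) (hγdiag : ∀ i, γ i i ≤ 1)
    {Δ : Matrix ι ι ℝ}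
    (hΔ : ∀ i j, Δ i j =
      if i = j then 0 else -(Real.log (γ i j) + Real.log (γ j i)) / 2) :
    (∀ i j, 0 ≤ Δ i j) ∧ (∀ i j, Δ i j = 0 ↔ i = j) ∧
      (∀ i j, Δ i j = Δ j i) ∧ (∀ i j k, Δ i j ≤ Δ i k + Δ k j) := by
  have hfund : IsFundamentalMatrix W Z := hZ ▸ isFundamentalMatrix_tsum_pow hW hsum
  obtain rfl : γ = coupling a b Z := Matrix.ext hγdef
  obtain rfl : Δ = surprisalDist (coupling a b Z) := Matrix.ext hΔ
  have hmul : ∀ i j k,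
      coupling a b Z i k * coupling a b Z k j ≤ coupling a b Z i j := fun i j k =>
    (hfund.coupling_mul_le_mul_diag (fun l => (ha l).le) (fun l => (hb l).le) i j k).trans
      (mul_le_of_le_one_right (hγpos i j).le (hγdiag k))
  have hswap : ∀ i j, i ≠ j → coupling a b Z i j * coupling a b Z j i < 1 := fun i j hij =>
    (hfund.coupling_mul_swap_lt_mul_diag ha hb hij).trans_le
      (mul_le_one₀ (hγdiag i) (hγpos j j).le (hγdiag j))
  refine ⟨fun i j => ?_, fun i j => ⟨fun h => ?_, ?_⟩, surprisalDist_comm _,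
    surprisalDist_triangle hγpos hmul⟩
  · exact surprisalDist_nonneg (hγpos i j) (hγpos j i) ((hmul i i j).trans (hγdiag i))
  · exact of_not_not fun hij =>
      (surprisalDist_pos hij (hγpos i j) (hγpos j i) (hswap i j hij)).ne' h
  · rintro rfl
    exact surprisalDist_self _ i

/-- The margin-constrained bag-of-paths surprisal distance is a distance metric. -/
theorem stmt13 (n : ℕ) (hn : 2 ≤ n) (W : Matrix (Fin n) (Fin n) ℝ)
    (hW : ∀ i j, 0 ≤ W i j)
    (hsum : Summable (fun t : ℕ => W ^ t))
    (Z : Matrix (Fin n) (Fin n) ℝ) (hZ : Z = ∑' t : ℕ, W ^ t)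
    (hZinv : Z = (1 - W)⁻¹)
    (a b : Fin n → ℝ) (ha : ∀ i, 0 < a i) (hb : ∀ i, 0 < b i)
    (γ : Matrix (Fin n) (Fin n) ℝ) (hγdef : ∀ i j, γ i j = a i * b j * Z i j)
    (hγpos : ∀ i j, 0 < γ i j) (hγ1 : ∑ i, ∑ j, γ i j = 1)
    (Δ : Matrix (Fin n) (Fin n) ℝ)
    (hΔ : ∀ i j, Δ i j =
      if i = j then 0 else -(Real.log (γ i j) + Real.log (γ j i)) / 2) :
    (∀ i j, 0 ≤ Δ i j) ∧ (∀ i j, Δ i j = 0 ↔ i = j) ∧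
      (∀ i j, Δ i j = Δ j i) ∧ (∀ i j k, Δ i j ≤ Δ i k + Δ k j) :=
  stmt13_general hW hsum hZ ha hb hγdef hγpos
    (fun i => (apply_le_sum_sum (fun i j => (hγpos i j).le) i i).trans_eq hγ1) hΔ
end

section
/- Let W be an n×n real matrix with nonnegative entries such that I − W is invertible, and let Z = (I − W)^{-1} with entries z_{ij}; assume z_{jj} > 0 for all j and write z^h_{ij} = z_{ij}/z_{jj}. Let σ_out ∈ ℝ^n be a nonnegative vector and let μ_in, μ_out ∈ ℝ^n be positive vectors satisfying, elementwise, (μ_in)_j = 1/∑_l z^h_{jl}·(μ_out)_l·(σ_out)_l for every j. Define n̄^h_{ij} = (1/((μ_out)_i·(μ_in)_j) − ∑_l (σ_out)_l · z^h_{li} · z^h_{jl}) · z_{ii} · W_{ij}. Then for every i: ∑_j n̄^h_{ij} = (1/((μ_in)_i·(μ_out)_i) − ∑_l (σ_out)_l · z^h_{li} · z^h_{il}) · z_{ii}. -/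
open Matrix

/-!
Balancing turns the bracket in `N i j` into the `j`-th entry of `Z_h *ᵥ a`, where
`a l = σout l * (μout l / μout i - zh l i)`. From `W * Z = Z - 1` one gets `W * Z_h = Z_h - D` with
`D` diagonal, so `Z_h *ᵥ a` is harmonic for `W` at every node where `a` vanishes. Since
`zh i i = 1`, the node `i` is such a node, and harmonicity there is the claim.
-/

section FundamentalMatrix

variable {ι R : Type*} [Fintype ι] [DecidableEq ι] [CommRing R]

theorem mul_inv_one_sub {W : Matrix ι ι R} (hinv : IsUnit (1 - W)) :
    W * (1 - W)⁻¹ = (1 - W)⁻¹ - 1 := by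
  have hmul : (1 - W) * (1 - W)⁻¹ = 1 := mul_nonsing_inv _ ((isUnit_iff_isUnit_det _).mp hinv)
  rw [sub_mul, one_mul] at hmul
  exact eq_sub_of_add_eq' (sub_eq_iff_eq_add.mp hmul).symm

end FundamentalMatrix

section HittingMatrix

variable {ι K : Type*} [Fintype ι] [DecidableEq ι] [Field K]

/-- The hitting fundamental matrix `Z_h` of a fundamental matrix `Z`: each column of `Z` is divided
by its diagonal entry. A column whose diagonal entry is `0` becomes `0`. -/
def hittingMatrix (Z : Matrix ι ι K) : Matrix ι ι K :=
  Z * diagonal Z.diag⁻¹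

theorem hittingMatrix_apply (Z : Matrix ι ι K) (i j : ι) :
    hittingMatrix Z i j = Z i j / Z j j := by
  rw [hittingMatrix, mul_diagonal, Pi.inv_apply, diag_apply, div_eq_mul_inv]

theorem hittingMatrix_apply_self {Z : Matrix ι ι K} {i : ι} (hi : Z i i ≠ 0) :
    hittingMatrix Z i i = 1 := by
  rw [hittingMatrix_apply, div_self hi]

theorem mul_hittingMatrix {W Z : Matrix ι ι K} (hWZ : W * Z = Z - 1) :
    W * hittingMatrix Z = hittingMatrix Z - diagonal Z.diag⁻¹ := by
  rw [hittingMatrix, ← Matrix.mul_assoc, hWZ, Matrix.sub_mul, Matrix.one_mul]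

theorem mulVec_hittingMatrix_mulVec_apply_of_eq_zero {W Z : Matrix ι ι K} (hWZ : W * Z = Z - 1)
    {a : ι → K} {i : ι} (ha : a i = 0) :
    (W *ᵥ (hittingMatrix Z *ᵥ a)) i = (hittingMatrix Z *ᵥ a) i := by
  rw [mulVec_mulVec, mul_hittingMatrix hWZ, sub_mulVec, Pi.sub_apply, mulVec_diagonal, ha,
    mul_zero, sub_zero]

end HittingMatrix

section DestinationWeight

variable {ι K : Type*} [Field K]

/-- The weight of the destination `l` in the expected number of passages through an edge leaving
`i`, once the input scaling vector has been eliminated by the balancing condition. Here `H` is the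
hitting fundamental matrix `Z_h`, `σ` is `σ_out` and `μ` is `μ_out`. -/
def destinationWeight (H : Matrix ι ι K) (σ μ : ι → K) (i l : ι) : K :=
  σ l * (μ l / μ i - H l i)

theorem destinationWeight_self {H : Matrix ι ι K} {μ : ι → K} {i : ι} (hH : H i i = 1)
    (hμ : μ i ≠ 0) (σ : ι → K) : destinationWeight H σ μ i i = 0 := by
  rw [destinationWeight, hH, div_self hμ, sub_self, mul_zero]

theorem one_div_sub_sum_eq_mulVec_destinationWeight [Fintype ι] {H : Matrix ι ι K}
    {σ μ ν : ι → K} {j : ι} (hbal : ν j * ∑ l, H j l * μ l * σ l = 1) (i : ι) :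
    1 / (μ i * ν j) - ∑ l, σ l * H l i * H j l = (H *ᵥ destinationWeight H σ μ i) j := by
  have hscale : 1 / (μ i * ν j) = (∑ l, H j l * μ l * σ l) / μ i := by
    rw [eq_inv_of_mul_eq_one_right hbal, one_div, mul_inv, mul_comm, div_eq_mul_inv]
  rw [hscale, Finset.sum_div, ← Finset.sum_sub_distrib]
  refine Finset.sum_congr rfl fun l _ => ?_
  rw [destinationWeight]
  ring

end DestinationWeight

theorem stmt17_general {ι K : Type*} [Fintype ι] [DecidableEq ι] [Field K]
    {W : Matrix ι ι K} (hinv : IsUnit (1 - W))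
    {Z : Matrix ι ι K} (hZ : Z = (1 - W)⁻¹) (hdiag : ∀ j, Z j j ≠ 0)
    {zh : Matrix ι ι K} (hzh : ∀ i j, zh i j = Z i j / Z j j)
    {σout μin μout : ι → K} (hμin : ∀ i, μin i ≠ 0) (hμout : ∀ i, μout i ≠ 0)
    (hfix : ∀ j, μin j = 1 / ∑ l, zh j l * μout l * σout l)
    {N : Matrix ι ι K}
    (hN : ∀ i j, N i j =
      (1 / (μout i * μin j) - ∑ l, σout l * zh l i * zh j l) * Z i i * W i j) (i : ι) :
    ∑ j, N i j = (1 / (μin i * μout i) - ∑ l, σout l * zh l i * zh i l) * Z i i := by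
  have hWZ : W * Z = Z - 1 := hZ ▸ mul_inv_one_sub hinv
  obtain rfl : zh = hittingMatrix Z := by
    ext i j
    rw [hzh, hittingMatrix_apply]
  set a := destinationWeight (hittingMatrix Z) σout μout i
  have ha : a i = 0 :=
    destinationWeight_self (hittingMatrix_apply_self (hdiag i)) (hμout i) σout
  have hbal (j : ι) : μin j * ∑ l, hittingMatrix Z j l * μout l * σout l = 1 :=
    (eq_div_iff (ne_zero_of_one_div_ne_zero (hfix j ▸ hμin j))).mp (hfix j)
  have hbracket (j : ι) :
      1 / (μout i * μin j) - ∑ l, σout l * hittingMatrix Z l i * hittingMatrix Z j l =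
        (hittingMatrix Z *ᵥ a) j :=
    one_div_sub_sum_eq_mulVec_destinationWeight (hbal j) i
  calc ∑ j, N i j
      = ∑ j, W i j * (hittingMatrix Z *ᵥ a) j * Z i i :=
        Finset.sum_congr rfl fun j _ => by rw [hN, hbracket]; ring
    _ = (W *ᵥ (hittingMatrix Z *ᵥ a)) i * Z i i := (Finset.sum_mul ..).symm
    _ = (hittingMatrix Z *ᵥ a) i * Z i i := by
        rw [mulVec_hittingMatrix_mulVec_apply_of_eq_zero hWZ ha]
    _ = _ := by rw [mul_comm (μin i), hbracket]

/-- Matrix identity for the expected number of visits to a node in the margin-constrained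
bag-of-hitting-paths model. -/
theorem stmt17 (n : ℕ) (W : Matrix (Fin n) (Fin n) ℝ)
    (hW : ∀ i j, 0 ≤ W i j) (hinv : IsUnit (1 - W))
    (Z : Matrix (Fin n) (Fin n) ℝ) (hZ : Z = (1 - W)⁻¹)
    (hdiag : ∀ j, 0 < Z j j)
    (zh : Matrix (Fin n) (Fin n) ℝ) (hzh : ∀ i j, zh i j = Z i j / Z j j)
    (σout : Fin n → ℝ) (hσ : ∀ i, 0 ≤ σout i)
    (μin μout : Fin n → ℝ) (hμin : ∀ i, 0 < μin i) (hμout : ∀ i, 0 < μout i)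
    (hfix : ∀ j, μin j = 1 / ∑ l, zh j l * μout l * σout l)
    (N : Matrix (Fin n) (Fin n) ℝ)
    (hN : ∀ i j, N i j =
      (1 / (μout i * μin j) - ∑ l, σout l * zh l i * zh j l) * Z i i * W i j) :
    ∀ i, ∑ j, N i j =
      (1 / (μin i * μout i) - ∑ l, σout l * zh l i * zh i l) * Z i i := by
  exact stmt17_general hinv hZ (fun j => (hdiag j).ne') hzh (fun i => (hμin i).ne')
    (fun i => (hμout i).ne') hfix hN
end
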